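/- Let p ∈ Δ_m, q ∈ Δ_n, c ∈ ℝ^{m×n}, β > 0, and let π ∈ Δ_{m×n} (a nonnegative m×n matrix with total mass 1) be of the form π = diag(a) e^{−βc} diag(b) for some a ∈ ℝ_+^m and b ∈ ℝ_+^n. Let proj_{Γ(p,q)}(π) be the output of the rounding procedure (Algorithm 3). Then proj_{Γ(p,q)}(π) ∈ Γ(p,q) and ⟨c, proj_{Γ(p,q)}(π)⟩ − OT(p,q) ≤ β^{-1} log(mn) + 4(‖π𝟙 − p‖₁ + ‖πᵀ𝟙 − q‖₁) ‖c‖_osc. -/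

import Mathlib

open Finset Filter Topology ENNReal

noncomputable section

/-- Frobenius inner product `⟨c, π⟩ = ∑_{ij} c_ij π_ij`. -/
def frob {m n : ℕ} (c π : Matrix (Fin m) (Fin n) ℝ) : ℝ := ∑ i, ∑ j, c i j * π i j

/-- Row sums `π𝟙`. -/
def rowSum {m n : ℕ} (π : Matrix (Fin m) (Fin n) ℝ) : Fin m → ℝ := fun i => ∑ j, π i j

/-- Column sums `πᵀ𝟙`. -/
def colSum {m n : ℕ} (π : Matrix (Fin m) (Fin n) ℝ) : Fin n → ℝ := fun j => ∑ i, π i j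

/-- Kullback–Leibler divergence between nonnegative vectors. -/
def KLvec {k : ℕ} (a b : Fin k → ℝ) : ℝ := ∑ i, (a i * Real.log (a i / b i) - a i + b i)

/-- Kullback–Leibler divergence between nonnegative matrices. -/
def KLmat {m n : ℕ} (a b : Matrix (Fin m) (Fin n) ℝ) : ℝ :=
  ∑ i, ∑ j, (a i j * Real.log (a i j / b i j) - a i j + b i j)

/-- The tipless simplex `Δ*_k`: strictly positive entries summing to 1. -/
def simplexPos (k : ℕ) : Set (Fin k → ℝ) := {p | (∀ i, 0 < p i) ∧ ∑ i, p i = 1}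

/-- The simplex `Δ_k`: nonnegative entries summing to 1. -/
def simplexNN (k : ℕ) : Set (Fin k → ℝ) := {p | (∀ i, 0 ≤ p i) ∧ ∑ i, p i = 1}

/-- Transport plans `Γ(p, q)`. -/
def Gamma {m n : ℕ} (p : Fin m → ℝ) (q : Fin n → ℝ) : Set (Matrix (Fin m) (Fin n) ℝ) :=
  {π | (∀ i j, 0 ≤ π i j) ∧ rowSum π = p ∧ colSum π = q}

/-- Half-relaxed plans `Γ(*, q)`. -/
def GammaStar {m n : ℕ} (q : Fin n → ℝ) : Set (Matrix (Fin m) (Fin n) ℝ) :=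
  {π | (∀ i j, 0 ≤ π i j) ∧ colSum π = q}

/-- Reference plan `π^ref = (mn)⁻¹ 𝟙𝟙ᵀ`. -/
def piRef (m n : ℕ) : Matrix (Fin m) (Fin n) ℝ := fun _ _ => 1 / (m * n)

/-- Optimal transport value `OT(p,q)`. -/
def OTval {m n : ℕ} (c : Matrix (Fin m) (Fin n) ℝ) (p : Fin m → ℝ) (q : Fin n → ℝ) : ℝ :=
  ⨅ π : Gamma p q, frob c π.1

/-- Entropic OT objective `⟨c,π⟩ + β⁻¹ KL(π|π^ref)`. -/
def eotObj {m n : ℕ} (c : Matrix (Fin m) (Fin n) ℝ) (β : ℝ) (π : Matrix (Fin m) (Fin n) ℝ) : ℝ :=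
  frob c π + β⁻¹ * KLmat π (piRef m n)

/-- Entropic OT value `EOT_β(p,q)`. -/
def eotVal {m n : ℕ} (c : Matrix (Fin m) (Fin n) ℝ) (β : ℝ) (p : Fin m → ℝ) (q : Fin n → ℝ) : ℝ :=
  ⨅ π : Gamma p q, eotObj c β π.1

/-- Gibbs kernel `K = e^{-βc}` (entrywise). -/
def gibbs {m n : ℕ} (c : Matrix (Fin m) (Fin n) ℝ) (β : ℝ) : Matrix (Fin m) (Fin n) ℝ :=
  fun i j => Real.exp (-(β * c i j))

/-- Annealed Sinkhorn scaling vectors `(a_t, b_t)`: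
`b_0 = 𝟙`, `a_{t+1} = p ⊘ (K_t b_t)`, `b_{t+1} = q ⊘ (K_{t+1}ᵀ a_{t+1})`, `K_t = e^{-β_t c}`. -/
def sinkAB {m n : ℕ} (p : Fin m → ℝ) (q : Fin n → ℝ) (c : Matrix (Fin m) (Fin n) ℝ)
    (β : ℕ → ℝ) : ℕ → (Fin m → ℝ) × (Fin n → ℝ)
  | 0 => (fun _ => 1, fun _ => 1)
  | t + 1 =>
    let prev := sinkAB p q c β t
    let a : Fin m → ℝ := fun i => p i / ∑ j, gibbs c (β t) i j * prev.2 j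
    (a, fun j => q j / ∑ i, gibbs c (β (t + 1)) i j * a i)

/-- Annealed Sinkhorn primal iterate `π_t = diag(a_t) K_t diag(b_t)`. -/
def sinkPlan {m n : ℕ} (p : Fin m → ℝ) (q : Fin n → ℝ) (c : Matrix (Fin m) (Fin n) ℝ)
    (β : ℕ → ℝ) (t : ℕ) : Matrix (Fin m) (Fin n) ℝ :=
  fun i j => (sinkAB p q c β t).1 i * gibbs c (β t) i j * (sinkAB p q c β t).2 j

/-- `ℓ¹` norm of a vector. -/
def l1vec {k : ℕ} (a : Fin k → ℝ) : ℝ := ∑ i, |a i|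

/-- Oscillation semi-norm `‖c‖_osc = max c - min c`. -/
def cOsc {m n : ℕ} (c : Matrix (Fin m) (Fin n) ℝ) : ℝ :=
  (⨆ i, ⨆ j, c i j) - ⨅ i, ⨅ j, c i j

/-- `‖log p‖_∞`. -/
def logSup {k : ℕ} (p : Fin k → ℝ) : ℝ := ⨆ i, |Real.log (p i)|

/-- The rounding ("projection") procedure of Altschuler et al. (Algorithm 3). -/
def roundPlan {m n : ℕ} (p : Fin m → ℝ) (q : Fin n → ℝ) (π : Matrix (Fin m) (Fin n) ℝ) :
    Matrix (Fin m) (Fin n) ℝ :=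
  let π' : Matrix (Fin m) (Fin n) ℝ := fun i j => min 1 (p i / rowSum π i) * π i j
  let π'' : Matrix (Fin m) (Fin n) ℝ := fun i j => π' i j * min 1 (q j / colSum π' j)
  fun i j => π'' i j +
    (p i - rowSum π'' i) * (q j - colSum π'' j) / l1vec (fun i' => p i' - rowSum π'' i')

/-- Relaxed entropic objective `F^reg(π) = ⟨c,π⟩ + α⁻¹ KL(π𝟙|p) + β⁻¹ KL(π|π^ref)`. -/
def Freg {m n : ℕ} (c : Matrix (Fin m) (Fin n) ℝ) (p : Fin m → ℝ) (α β : ℝ)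
    (π : Matrix (Fin m) (Fin n) ℝ) : ℝ :=
  frob c π + α⁻¹ * KLvec (rowSum π) p + β⁻¹ * KLmat π (piRef m n)

/-- Dual functional for the relaxed entropic problem. -/
def dualFun {m n : ℕ} (p : Fin m → ℝ) (q : Fin n → ℝ) (c : Matrix (Fin m) (Fin n) ℝ)
    (α β : ℝ) (u : Fin m → ℝ) (v : Fin n → ℝ) : ℝ :=
  α⁻¹ * (∑ i, (1 - Real.exp (-(α * u i))) * p i) + ∑ j, v j * q j
    - β⁻¹ * (∑ i, ∑ j, Real.exp (β * (u i + v j - c i j)) * piRef m n i j) + β⁻¹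

/-- Dual functional of entropic OT. -/
def eotDual {m n : ℕ} (p : Fin m → ℝ) (q : Fin n → ℝ) (c : Matrix (Fin m) (Fin n) ℝ)
    (β : ℝ) (u : Fin m → ℝ) (v : Fin n → ℝ) : ℝ :=
  ∑ i, p i * u i + ∑ j, q j * v j
    + β⁻¹ * (1 - ∑ i, ∑ j, piRef m n i j * Real.exp (β * (u i + v j - c i j)))

/-- The set `C_β` of plans of the form `diag(a) e^{-βc} diag(b)` with `a, b ≥ 0`. -/
def scalingSet {m n : ℕ} (c : Matrix (Fin m) (Fin n) ℝ) (β : ℝ) :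
    Set (Matrix (Fin m) (Fin n) ℝ) :=
  {π | ∃ a : Fin m → ℝ, ∃ b : Fin n → ℝ, (∀ i, 0 ≤ a i) ∧ (∀ j, 0 ≤ b j) ∧
    π = fun i j => a i * Real.exp (-(β * c i j)) * b j}

/-! Round an arbitrary competitor `γ ∈ Γ(p, q)` to a plan `γ'` with the marginals of `π`, and split
`⟨c, π̄⟩ - ⟨c, γ⟩` as `⟨c, π̄ - π⟩ + ⟨c, π - γ'⟩ + ⟨c, γ' - γ⟩`.

The middle term is at most the entropy of `π` over `β`: since `log π = log a ⊕ log b - βc` on the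
support of `π`, the quantity `β⟨c, x⟩ + ⟨log π, x⟩` depends only on the marginals of `x`.

In the outer terms the matrices paired with `c` have total mass zero, so `c` may be centred at the
midpoint of its range. Capping and then refilling the marginals remove and add the same mass, which
is at most the sum of the positive parts of the marginal errors, that is, half of their `ℓ¹` norm.
These two savings replace the constant `4` by `1`. -/

section Real

variable {ι : Type*} [Fintype ι]

lemma min_one_div_mul_self {K : Type*} [Field K] [LinearOrder K] [IsStrictOrderedRing K]
    {s t : K} (hs : 0 ≤ s) (ht : 0 ≤ t) : min 1 (t / s) * s = min s t := by
  rcases hs.eq_or_lt with rfl | hs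
  · simp [ht]
  · rw [min_mul_of_nonneg _ _ hs.le, one_mul, div_mul_cancel₀ _ hs.ne']

lemma two_mul_sum_posPart_eq_sum_abs {x : ι → ℝ} (hx : ∑ i, x i = 0) :
    2 * ∑ i, (x i)⁺ = ∑ i, |x i| := by
  calc 2 * ∑ i, (x i)⁺ = ∑ i, (|x i| + x i) := by
        simp only [abs_add_eq_two_nsmul_posPart, nsmul_eq_mul, Nat.cast_ofNat, Finset.mul_sum]
    _ = ∑ i, |x i| := by rw [Finset.sum_add_distrib, hx, add_zero]

lemma sum_negMulLog_le_log_card {w : ι → ℝ} (hw : ∀ i, 0 ≤ w i) (hsum : ∑ i, w i = 1) :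
    ∑ i, Real.negMulLog (w i) ≤ Real.log (Fintype.card ι) := by
  have : Nonempty ι := by
    by_contra h
    rw [not_nonempty_iff] at h
    simp at hsum
  have hN : (0 : ℝ) < Fintype.card ι := by exact_mod_cast Fintype.card_pos
  have jensen := Real.concaveOn_negMulLog.le_map_sum (t := Finset.univ)
    (w := fun _ : ι => (Fintype.card ι : ℝ)⁻¹) (p := w) (fun _ _ => by positivity)
    (by simp [hN.ne']) (fun i _ => hw i)
  simp only [smul_eq_mul, ← Finset.mul_sum, hsum, mul_one, Real.negMulLog, Real.log_inv,
    neg_mul_neg] at jensen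
  exact le_of_mul_le_mul_left jensen (inv_pos.2 hN)

end Real

section Marginals

variable {m n : ℕ}

lemma l1vec_nonneg {k : ℕ} (x : Fin k → ℝ) : 0 ≤ l1vec x :=
  Finset.sum_nonneg fun i _ => abs_nonneg (x i)

lemma l1vec_of_nonneg {k : ℕ} {x : Fin k → ℝ} (hx : ∀ i, 0 ≤ x i) : l1vec x = ∑ i, x i :=
  Finset.sum_congr rfl fun i _ => abs_of_nonneg (hx i)

lemma l1vec_sub_comm {k : ℕ} (x y : Fin k → ℝ) :
    l1vec (fun i => x i - y i) = l1vec (fun i => y i - x i) :=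
  Finset.sum_congr rfl fun i _ => abs_sub_comm (x i) (y i)

lemma sum_colSum (π : Matrix (Fin m) (Fin n) ℝ) : ∑ j, colSum π j = ∑ i, rowSum π i :=
  Finset.sum_comm

lemma rowSum_nonneg {π : Matrix (Fin m) (Fin n) ℝ} (hπ : ∀ i j, 0 ≤ π i j) (i : Fin m) :
    0 ≤ rowSum π i :=
  Finset.sum_nonneg fun j _ => hπ i j

lemma colSum_nonneg {π : Matrix (Fin m) (Fin n) ℝ} (hπ : ∀ i j, 0 ≤ π i j) (j : Fin n) :
    0 ≤ colSum π j :=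
  Finset.sum_nonneg fun i _ => hπ i j

lemma eq_zero_of_rowSum_eq_zero {π : Matrix (Fin m) (Fin n) ℝ} (hπ : ∀ i j, 0 ≤ π i j) {i : Fin m}
    (h : rowSum π i = 0) (j : Fin n) : π i j = 0 :=
  (Finset.sum_eq_zero_iff_of_nonneg fun j _ => hπ i j).1 h j (Finset.mem_univ j)

lemma eq_zero_of_colSum_eq_zero {π : Matrix (Fin m) (Fin n) ℝ} (hπ : ∀ i j, 0 ≤ π i j) {j : Fin n}
    (h : colSum π j = 0) (i : Fin m) : π i j = 0 :=
  eq_zero_of_rowSum_eq_zero (π := π.transpose) (fun j i => hπ i j) h i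

lemma sum_eq_of_mem_Gamma {p : Fin m → ℝ} {q : Fin n → ℝ} {π : Matrix (Fin m) (Fin n) ℝ}
    (hπ : π ∈ Gamma p q) : ∑ i, ∑ j, π i j = ∑ i, p i :=
  Finset.sum_congr rfl fun i _ => congrFun hπ.2.1 i

end Marginals

section Rounding

variable {m n : ℕ} {p : Fin m → ℝ} {q : Fin n → ℝ} {π σ : Matrix (Fin m) (Fin n) ℝ}

/-- First step of the rounding procedure: row `i` is scaled down, if necessary, so that its sum
does not exceed `p i`. The second step is the same operation on the transpose. -/
def capRows (p : Fin m → ℝ) (π : Matrix (Fin m) (Fin n) ℝ) : Matrix (Fin m) (Fin n) ℝ :=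
  fun i j => min 1 (p i / rowSum π i) * π i j

/-- The matrix `π''` of the rounding procedure: rows are capped by `p`, then columns by `q`. -/
def capMarginals (p : Fin m → ℝ) (q : Fin n → ℝ) (π : Matrix (Fin m) (Fin n) ℝ) :
    Matrix (Fin m) (Fin n) ℝ :=
  (capRows q (capRows p π).transpose).transpose

/-- Last step of the rounding procedure: the rank-one correction `Δ_p Δ_qᵀ / ‖Δ_p‖₁`. It is `0`
when `Δ_p = 0`, by the convention `x / 0 = 0`. -/
def fillMarginals (p : Fin m → ℝ) (q : Fin n → ℝ) (σ : Matrix (Fin m) (Fin n) ℝ) :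
    Matrix (Fin m) (Fin n) ℝ :=
  fun i j => σ i j +
    (p i - rowSum σ i) * (q j - colSum σ j) / l1vec (fun i' => p i' - rowSum σ i')

lemma roundPlan_eq_fillMarginals_capMarginals (p : Fin m → ℝ) (q : Fin n → ℝ)
    (π : Matrix (Fin m) (Fin n) ℝ) :
    roundPlan p q π = fillMarginals p q (capMarginals p q π) := by
  have hcap : capMarginals p q π =
      fun i j => capRows p π i j * min 1 (q j / colSum (capRows p π) j) := by
    ext i j
    exact mul_comm _ _
  rw [hcap]
  rfl

lemma capRows_nonneg (hp : ∀ i, 0 ≤ p i) (hπ : ∀ i j, 0 ≤ π i j) (i : Fin m) (j : Fin n) :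
    0 ≤ capRows p π i j :=
  mul_nonneg (le_min zero_le_one (div_nonneg (hp i) (rowSum_nonneg hπ i))) (hπ i j)

lemma capRows_le (hπ : ∀ i j, 0 ≤ π i j) (i : Fin m) (j : Fin n) : capRows p π i j ≤ π i j :=
  mul_le_of_le_one_left (hπ i j) (min_le_left _ _)

lemma rowSum_capRows (hp : ∀ i, 0 ≤ p i) (hπ : ∀ i j, 0 ≤ π i j) (i : Fin m) :
    rowSum (capRows p π) i = min (rowSum π i) (p i) := by
  rw [← min_one_div_mul_self (rowSum_nonneg hπ i) (hp i)]
  exact (Finset.mul_sum _ _ _).symm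

lemma sum_sub_capRows (hp : ∀ i, 0 ≤ p i) (hπ : ∀ i j, 0 ≤ π i j) :
    ∑ i, rowSum π i - ∑ i, rowSum (capRows p π) i = ∑ i, (rowSum π i - p i)⁺ := by
  rw [← Finset.sum_sub_distrib]
  refine Finset.sum_congr rfl fun i _ => ?_
  rw [rowSum_capRows hp hπ, inf_eq_sub_posPart_sub]
  exact sub_sub_cancel _ _

lemma capMarginals_nonneg (hp : ∀ i, 0 ≤ p i) (hq : ∀ j, 0 ≤ q j) (hπ : ∀ i j, 0 ≤ π i j)
    (i : Fin m) (j : Fin n) : 0 ≤ capMarginals p q π i j :=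
  capRows_nonneg hq (fun j i => capRows_nonneg hp hπ i j) j i

lemma capMarginals_le_capRows (hp : ∀ i, 0 ≤ p i) (hπ : ∀ i j, 0 ≤ π i j) (i : Fin m)
    (j : Fin n) : capMarginals p q π i j ≤ capRows p π i j :=
  capRows_le (π := (capRows p π).transpose) (fun j i => capRows_nonneg hp hπ i j) j i

lemma rowSum_capMarginals_le (hp : ∀ i, 0 ≤ p i) (hπ : ∀ i j, 0 ≤ π i j) (i : Fin m) :
    rowSum (capMarginals p q π) i ≤ p i :=
  calc rowSum (capMarginals p q π) i
      ≤ rowSum (capRows p π) i :=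
        Finset.sum_le_sum fun j _ => capMarginals_le_capRows hp hπ i j
    _ = min (rowSum π i) (p i) := rowSum_capRows hp hπ i
    _ ≤ p i := min_le_right _ _

lemma colSum_capMarginals_le (hp : ∀ i, 0 ≤ p i) (hq : ∀ j, 0 ≤ q j) (hπ : ∀ i j, 0 ≤ π i j)
    (j : Fin n) : colSum (capMarginals p q π) j ≤ q j :=
  (rowSum_capRows hq (fun j i => capRows_nonneg hp hπ i j) j).trans_le (min_le_right _ _)

lemma sum_sub_capMarginals_le (hp : ∀ i, 0 ≤ p i) (hq : ∀ j, 0 ≤ q j)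
    (hπ : ∀ i j, 0 ≤ π i j) :
    ∑ i, rowSum π i - ∑ i, rowSum (capMarginals p q π) i ≤
      ∑ i, (rowSum π i - p i)⁺ + ∑ j, (colSum π j - q j)⁺ := by
  have hrow := sum_sub_capRows hp hπ
  have hcol : ∑ j, colSum (capRows p π) j - ∑ j, colSum (capMarginals p q π) j =
      ∑ j, (colSum (capRows p π) j - q j)⁺ :=
    sum_sub_capRows hq fun j i => capRows_nonneg hp hπ i j
  have hmono : ∑ j, (colSum (capRows p π) j - q j)⁺ ≤ ∑ j, (colSum π j - q j)⁺ :=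
    Finset.sum_le_sum fun j _ => posPart_mono <|
      sub_le_sub_right (Finset.sum_le_sum fun i _ => capRows_le hπ i j) _
  rw [sum_colSum, sum_colSum] at hcol
  linarith

lemma sum_marginal_deficits_eq (hpq : ∑ i, p i = ∑ j, q j) (σ : Matrix (Fin m) (Fin n) ℝ) :
    ∑ i, (p i - rowSum σ i) = ∑ j, (q j - colSum σ j) := by
  rw [Finset.sum_sub_distrib, Finset.sum_sub_distrib, hpq, sum_colSum]

lemma le_fillMarginals (hrow : ∀ i, rowSum σ i ≤ p i) (hcol : ∀ j, colSum σ j ≤ q j)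
    (i : Fin m) (j : Fin n) : σ i j ≤ fillMarginals p q σ i j :=
  le_add_of_nonneg_right <| div_nonneg
    (mul_nonneg (sub_nonneg.2 (hrow i)) (sub_nonneg.2 (hcol j))) (l1vec_nonneg _)

lemma rowSum_fillMarginals (hpq : ∑ i, p i = ∑ j, q j) (hrow : ∀ i, rowSum σ i ≤ p i) :
    rowSum (fillMarginals p q σ) = p := by
  have hdeficit : ∀ i, 0 ≤ p i - rowSum σ i := fun i => sub_nonneg.2 (hrow i)
  ext i
  set D := ∑ i, (p i - rowSum σ i) with hD
  have hzero : D = 0 → p i - rowSum σ i = 0 := fun h =>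
    (Finset.sum_eq_zero_iff_of_nonneg fun i _ => hdeficit i).1 h i (Finset.mem_univ i)
  calc rowSum (fillMarginals p q σ) i
      = rowSum σ i + (p i - rowSum σ i) * (∑ j, (q j - colSum σ j)) / D := by
        rw [hD, ← l1vec_of_nonneg hdeficit, Finset.mul_sum, Finset.sum_div]
        exact Finset.sum_add_distrib
    _ = p i := by
        rw [← sum_marginal_deficits_eq hpq, mul_div_cancel_of_imp hzero, add_sub_cancel]

lemma fillMarginals_transpose (hpq : ∑ i, p i = ∑ j, q j) (hrow : ∀ i, rowSum σ i ≤ p i)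
    (hcol : ∀ j, colSum σ j ≤ q j) :
    (fillMarginals p q σ).transpose = fillMarginals q p σ.transpose := by
  have hl1 : l1vec (fun i => p i - rowSum σ i) = l1vec (fun j => q j - colSum σ j) := by
    rw [l1vec_of_nonneg fun i => sub_nonneg.2 (hrow i),
      l1vec_of_nonneg fun j => sub_nonneg.2 (hcol j), sum_marginal_deficits_eq hpq]
  ext j i
  change σ i j + (p i - rowSum σ i) * (q j - colSum σ j) / l1vec (fun i => p i - rowSum σ i) =
    σ i j + (q j - colSum σ j) * (p i - rowSum σ i) / l1vec (fun j => q j - colSum σ j)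
  rw [hl1, mul_comm (p i - rowSum σ i)]

lemma colSum_fillMarginals (hpq : ∑ i, p i = ∑ j, q j) (hrow : ∀ i, rowSum σ i ≤ p i)
    (hcol : ∀ j, colSum σ j ≤ q j) : colSum (fillMarginals p q σ) = q := by
  change rowSum (fillMarginals p q σ).transpose = q
  rw [fillMarginals_transpose hpq hrow hcol]
  exact rowSum_fillMarginals hpq.symm hcol

lemma capMarginals_le_roundPlan (hp : ∀ i, 0 ≤ p i) (hq : ∀ j, 0 ≤ q j)
    (hπ : ∀ i j, 0 ≤ π i j) (i : Fin m) (j : Fin n) :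
    capMarginals p q π i j ≤ roundPlan p q π i j := by
  rw [roundPlan_eq_fillMarginals_capMarginals]
  exact le_fillMarginals (rowSum_capMarginals_le hp hπ) (colSum_capMarginals_le hp hq hπ) i j

lemma roundPlan_mem_Gamma (hp : ∀ i, 0 ≤ p i) (hq : ∀ j, 0 ≤ q j)
    (hpq : ∑ i, p i = ∑ j, q j) (hπ : ∀ i j, 0 ≤ π i j) : roundPlan p q π ∈ Gamma p q := by
  have hrow := rowSum_capMarginals_le (q := q) hp hπ
  have hcol := colSum_capMarginals_le hp hq hπ
  refine ⟨fun i j =>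
    (capMarginals_nonneg hp hq hπ i j).trans (capMarginals_le_roundPlan hp hq hπ i j), ?_⟩
  rw [roundPlan_eq_fillMarginals_capMarginals]
  exact ⟨rowSum_fillMarginals hpq hrow, colSum_fillMarginals hpq hrow hcol⟩

lemma sum_abs_roundPlan_sub_le (hp : ∀ i, 0 ≤ p i) (hq : ∀ j, 0 ≤ q j)
    (hpq : ∑ i, p i = ∑ j, q j) (hπ : ∀ i j, 0 ≤ π i j) (hmass : ∑ i, ∑ j, π i j = ∑ i, p i) :
    ∑ i, ∑ j, |roundPlan p q π i j - π i j| ≤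
      l1vec (fun i => rowSum π i - p i) + l1vec (fun j => colSum π j - q j) := by
  set σ := capMarginals p q π
  have hround : ∑ i, ∑ j, roundPlan p q π i j = ∑ i, ∑ j, π i j :=
    (sum_eq_of_mem_Gamma (roundPlan_mem_Gamma hp hq hpq hπ)).trans hmass.symm
  have hrow : 2 * ∑ i, (rowSum π i - p i)⁺ = l1vec (fun i => rowSum π i - p i) := by
    refine two_mul_sum_posPart_eq_sum_abs ?_
    rw [Finset.sum_sub_distrib]
    exact sub_eq_zero.2 hmass
  have hcol : 2 * ∑ j, (colSum π j - q j)⁺ = l1vec (fun j => colSum π j - q j) := by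
    refine two_mul_sum_posPart_eq_sum_abs ?_
    rw [Finset.sum_sub_distrib, sum_colSum, ← hpq]
    exact sub_eq_zero.2 hmass
  calc ∑ i, ∑ j, |roundPlan p q π i j - π i j|
      ≤ ∑ i, ∑ j, ((roundPlan p q π i j - σ i j) + (π i j - σ i j)) := by
        refine Finset.sum_le_sum fun i _ => Finset.sum_le_sum fun j _ => ?_
        have hσround : σ i j ≤ roundPlan p q π i j := capMarginals_le_roundPlan hp hq hπ i j
        have hσπ : σ i j ≤ π i j := (capMarginals_le_capRows hp hπ i j).trans (capRows_le hπ i j)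
        rw [abs_le]
        constructor <;> linarith
    _ = 2 * (∑ i, rowSum π i - ∑ i, rowSum σ i) := by
        simp only [Finset.sum_add_distrib, Finset.sum_sub_distrib, hround]
        exact (two_mul _).symm
    _ ≤ 2 * (∑ i, (rowSum π i - p i)⁺ + ∑ j, (colSum π j - q j)⁺) := by
        gcongr
        exact sum_sub_capMarginals_le hp hq hπ
    _ = _ := by rw [mul_add, hrow, hcol]

end Rounding

section Cost

variable {m n : ℕ}

lemma frob_sub (c x y : Matrix (Fin m) (Fin n) ℝ) : frob c (x - y) = frob c x - frob c y := by
  simp only [frob, Matrix.sub_apply, mul_sub, Finset.sum_sub_distrib]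

lemma le_iSup_entries (c : Matrix (Fin m) (Fin n) ℝ) (i : Fin m) (j : Fin n) :
    c i j ≤ ⨆ i, ⨆ j, c i j :=
  (le_ciSup (Set.finite_range (c i)).bddAbove j).trans
    (le_ciSup (f := fun i => ⨆ j, c i j) (Set.finite_range _).bddAbove i)

lemma iInf_entries_le (c : Matrix (Fin m) (Fin n) ℝ) (i : Fin m) (j : Fin n) :
    ⨅ i, ⨅ j, c i j ≤ c i j :=
  (ciInf_le (f := fun i => ⨅ j, c i j) (Set.finite_range _).bddBelow i).trans
    (ciInf_le (Set.finite_range (c i)).bddBelow j)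

lemma cOsc_nonneg (c : Matrix (Fin m) (Fin n) ℝ) : 0 ≤ cOsc c := by
  rcases isEmpty_or_nonempty (Fin m × Fin n) with h | ⟨i, j⟩
  · rcases isEmpty_prod.1 h with h | h <;> simp [cOsc]
  · exact sub_nonneg.2 ((iInf_entries_le c i j).trans (le_iSup_entries c i j))

lemma frob_le_half_cOsc_mul_sum_abs (c : Matrix (Fin m) (Fin n) ℝ)
    {x : Matrix (Fin m) (Fin n) ℝ} (hx : ∑ i, ∑ j, x i j = 0) :
    frob c x ≤ cOsc c / 2 * ∑ i, ∑ j, |x i j| := by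
  set mid := ((⨆ i, ⨆ j, c i j) + ⨅ i, ⨅ j, c i j) / 2 with hmid
  have hcentred : ∀ i j, |c i j - mid| ≤ cOsc c / 2 := fun i j => by
    have hsup := le_iSup_entries c i j
    have hinf := iInf_entries_le c i j
    rw [abs_le, cOsc]
    constructor <;> linarith
  calc frob c x = ∑ i, ∑ j, (c i j - mid) * x i j := by
        simp only [frob, sub_mul, Finset.sum_sub_distrib, ← Finset.mul_sum, hx, mul_zero, sub_zero]
    _ ≤ ∑ i, ∑ j, cOsc c / 2 * |x i j| := by
        refine Finset.sum_le_sum fun i _ => Finset.sum_le_sum fun j _ => ?_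
        calc (c i j - mid) * x i j ≤ |c i j - mid| * |x i j| := by
              rw [← abs_mul]
              exact le_abs_self _
          _ ≤ cOsc c / 2 * |x i j| := by
              gcongr
              exact hcentred i j
    _ = cOsc c / 2 * ∑ i, ∑ j, |x i j| := by simp only [Finset.mul_sum]

lemma frob_roundPlan_sub_le (c : Matrix (Fin m) (Fin n) ℝ) {p : Fin m → ℝ} {q : Fin n → ℝ}
    {π : Matrix (Fin m) (Fin n) ℝ} (hp : ∀ i, 0 ≤ p i) (hq : ∀ j, 0 ≤ q j)
    (hpq : ∑ i, p i = ∑ j, q j) (hπ : ∀ i j, 0 ≤ π i j) (hmass : ∑ i, ∑ j, π i j = ∑ i, p i) :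
    frob c (roundPlan p q π) - frob c π ≤
      cOsc c / 2 * (l1vec (fun i => rowSum π i - p i) + l1vec (fun j => colSum π j - q j)) := by
  have hzero : ∑ i, ∑ j, (roundPlan p q π - π) i j = 0 := by
    simp only [Matrix.sub_apply, Finset.sum_sub_distrib]
    rw [hmass, sum_eq_of_mem_Gamma (roundPlan_mem_Gamma hp hq hpq hπ), sub_self]
  rw [← frob_sub]
  refine (frob_le_half_cOsc_mul_sum_abs c hzero).trans ?_
  exact mul_le_mul_of_nonneg_left (sum_abs_roundPlan_sub_le hp hq hpq hπ hmass)
    (div_nonneg (cOsc_nonneg c) zero_le_two)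

end Cost

section Scaling

variable {m n : ℕ} {c π γ : Matrix (Fin m) (Fin n) ℝ} {β : ℝ}

lemma frob_add_marginal (u : Fin m → ℝ) (v : Fin n → ℝ) (x : Matrix (Fin m) (Fin n) ℝ) :
    frob (fun i j => u i + v j) x = ∑ i, u i * rowSum x i + ∑ j, v j * colSum x j := by
  simp only [frob, add_mul, Finset.sum_add_distrib, rowSum, colSum, Finset.mul_sum]
  exact congrArg _ Finset.sum_comm

lemma nonneg_of_mem_scalingSet (hπ : π ∈ scalingSet c β) (i : Fin m) (j : Fin n) :
    0 ≤ π i j := by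
  obtain ⟨a, b, ha, hb, rfl⟩ := hπ
  exact mul_nonneg (mul_nonneg (ha i) (Real.exp_nonneg _)) (hb j)

lemma exists_add_log_eq_of_mem_scalingSet (hπ : π ∈ scalingSet c β) :
    ∃ (u : Fin m → ℝ) (v : Fin n → ℝ),
      ∀ i j, π i j ≠ 0 → β * c i j + Real.log (π i j) = u i + v j := by
  obtain ⟨a, b, -, -, rfl⟩ := hπ
  refine ⟨fun i => Real.log (a i), fun j => Real.log (b j), fun i j hij => ?_⟩
  have hb : b j ≠ 0 := right_ne_zero_of_mul hij
  have ha : a i ≠ 0 := left_ne_zero_of_mul (left_ne_zero_of_mul hij)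
  rw [Real.log_mul (mul_ne_zero ha (Real.exp_ne_zero _)) hb,
    Real.log_mul ha (Real.exp_ne_zero _), Real.log_exp]
  ring

/-- A zero of `diag(a) e^{-βc} diag(b)` forces a whole row or column to vanish. -/
lemma eq_zero_of_mem_Gamma_of_mem_scalingSet (hπ : π ∈ scalingSet c β)
    (hγ : γ ∈ Gamma (rowSum π) (colSum π)) {i : Fin m} {j : Fin n} (hij : π i j = 0) :
    γ i j = 0 := by
  obtain ⟨hγ_nonneg, hrow, hcol⟩ := hγ
  obtain ⟨a, b, -, -, rfl⟩ := hπ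
  rcases mul_eq_zero.1 hij with h | hb
  · have ha : a i = 0 := (mul_eq_zero.1 h).resolve_right (Real.exp_ne_zero _)
    refine eq_zero_of_rowSum_eq_zero hγ_nonneg ((congrFun hrow i).trans ?_) j
    simp [rowSum, ha]
  · refine eq_zero_of_colSum_eq_zero hγ_nonneg ((congrFun hcol j).trans ?_) i
    simp [colSum, hb]

lemma mul_frob_add_frob_log_eq_of_mem_scalingSet (hπ : π ∈ scalingSet c β)
    (hγ : γ ∈ Gamma (rowSum π) (colSum π)) :
    β * frob c γ + frob (fun i j => Real.log (π i j)) γ =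
      β * frob c π + frob (fun i j => Real.log (π i j)) π := by
  obtain ⟨u, v, huv⟩ := exists_add_log_eq_of_mem_scalingSet hπ
  have hpotential : ∀ x : Matrix (Fin m) (Fin n) ℝ, (∀ i j, π i j = 0 → x i j = 0) →
      β * frob c x + frob (fun i j => Real.log (π i j)) x =
        ∑ i, u i * rowSum x i + ∑ j, v j * colSum x j := fun x hx => by
    rw [← frob_add_marginal]
    simp only [frob, Finset.mul_sum, ← Finset.sum_add_distrib]
    refine Finset.sum_congr rfl fun i _ => Finset.sum_congr rfl fun j _ => ?_
    rcases eq_or_ne (π i j) 0 with hij | hij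
    · simp only [hx i j hij, mul_zero, add_zero]
    · rw [← huv i j hij]
      ring
  rw [hpotential γ fun i j => eq_zero_of_mem_Gamma_of_mem_scalingSet hπ hγ,
    hpotential π fun _ _ => id, hγ.2.1, hγ.2.2]

lemma frob_le_add_log_of_mem_scalingSet (hβ : 0 < β) (hπ : π ∈ scalingSet c β)
    (hmass : ∑ i, ∑ j, π i j = 1) (hγ : γ ∈ Gamma (rowSum π) (colSum π)) :
    frob c π ≤ frob c γ + β⁻¹ * Real.log (m * n) := by
  have hπ_nonneg := nonneg_of_mem_scalingSet hπ
  have hmass_prod : ∑ k : Fin m × Fin n, π k.1 k.2 = 1 := by rwa [Fintype.sum_prod_type]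
  have hπ_le_one : ∀ i j, π i j ≤ 1 := fun i j => hmass_prod ▸
    Finset.single_le_sum (f := fun k : Fin m × Fin n => π k.1 k.2)
      (fun k _ => hπ_nonneg k.1 k.2) (Finset.mem_univ (i, j))
  have hcross : frob (fun i j => Real.log (π i j)) γ ≤ 0 :=
    Finset.sum_nonpos fun i _ => Finset.sum_nonpos fun j _ =>
      mul_nonpos_of_nonpos_of_nonneg (Real.log_nonpos (hπ_nonneg i j) (hπ_le_one i j)) (hγ.1 i j)
  have hentropy : -frob (fun i j => Real.log (π i j)) π ≤ Real.log (m * n) := by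
    have h := sum_negMulLog_le_log_card (fun k : Fin m × Fin n => hπ_nonneg k.1 k.2) hmass_prod
    simpa [Fintype.sum_prod_type, Real.negMulLog, frob, mul_comm] using h
  have hmarginals := mul_frob_add_frob_log_eq_of_mem_scalingSet hπ hγ
  rw [← sub_le_iff_le_add', le_inv_mul_iff₀ hβ]
  linarith

end Scaling

theorem rounding_guarantee_general {m n : ℕ} {p : Fin m → ℝ} {q : Fin n → ℝ}
    {c π : Matrix (Fin m) (Fin n) ℝ} {β : ℝ} (hp : p ∈ simplexNN m) (hq : q ∈ simplexNN n)
    (hβ : 0 < β) (hπ : π ∈ scalingSet c β) (hmass : ∑ i, ∑ j, π i j = 1) :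
    roundPlan p q π ∈ Gamma p q ∧
      frob c (roundPlan p q π) - OTval c p q ≤
        β⁻¹ * Real.log (m * n) +
          (l1vec (fun i => rowSum π i - p i) + l1vec (fun j => colSum π j - q j)) * cOsc c := by
  obtain ⟨hp_nonneg, hp_sum⟩ := hp
  obtain ⟨hq_nonneg, hq_sum⟩ := hq
  have hpq := hp_sum.trans hq_sum.symm
  have hπ_nonneg := nonneg_of_mem_scalingSet hπ
  have hmem := roundPlan_mem_Gamma hp_nonneg hq_nonneg hpq hπ_nonneg
  refine ⟨hmem, ?_⟩
  have : Nonempty (Gamma p q) := ⟨⟨_, hmem⟩⟩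
  refine sub_le_comm.1 (le_ciInf fun ⟨γ, hγ⟩ => ?_)
  have hrow := rowSum_nonneg hπ_nonneg
  have hcol := colSum_nonneg hπ_nonneg
  have hγ_mass : ∑ i, ∑ j, γ i j = ∑ i, rowSum π i :=
    ((sum_eq_of_mem_Gamma hγ).trans hp_sum).trans hmass.symm
  have hround := frob_roundPlan_sub_le c hp_nonneg hq_nonneg hpq hπ_nonneg (hmass.trans hp_sum.symm)
  have hround' := frob_roundPlan_sub_le c hrow hcol (sum_colSum π).symm hγ.1 hγ_mass
  have hopt := frob_le_add_log_of_mem_scalingSet hβ hπ hmass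
    (roundPlan_mem_Gamma hrow hcol (sum_colSum π).symm hγ.1)
  rw [hγ.2.1, hγ.2.2, l1vec_sub_comm p, l1vec_sub_comm q] at hround'
  linarith

/-- rounding guarantee, Lemma 1, extracted from Altschuler et al..
If `π ∈ Δ_{m×n}` has the form `diag(a) e^{-βc} diag(b)`, then the rounded plan belongs to
`Γ(p,q)` and `⟨c, proj(π)⟩ - OT(p,q) ≤ β⁻¹ log(mn) + 4(‖π𝟙-p‖₁ + ‖πᵀ𝟙-q‖₁)‖c‖_osc`. -/
theorem rounding_guarantee
    {m n : ℕ} (p : Fin m → ℝ) (q : Fin n → ℝ) (c : Matrix (Fin m) (Fin n) ℝ)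
    (hp : p ∈ simplexNN m) (hq : q ∈ simplexNN n)
    (β : ℝ) (hβ : 0 < β)
    (π : Matrix (Fin m) (Fin n) ℝ) (hπnn : ∀ i j, 0 ≤ π i j)
    (hπmass : ∑ i, ∑ j, π i j = 1)
    (a : Fin m → ℝ) (b : Fin n → ℝ) (ha : ∀ i, 0 ≤ a i) (hb : ∀ j, 0 ≤ b j)
    (hform : π = fun i j => a i * Real.exp (-(β * c i j)) * b j) :
    roundPlan p q π ∈ Gamma p q ∧
      frob c (roundPlan p q π) - OTval c p q ≤
        β⁻¹ * Real.log (m * n) +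
          4 * (l1vec (fun i => rowSum π i - p i) + l1vec (fun j => colSum π j - q j)) *
            cOsc c := by
  obtain ⟨hmem, hbound⟩ :=
    rounding_guarantee_general hp hq hβ (⟨a, b, ha, hb, hform⟩ : π ∈ scalingSet c β) hπmass
  refine ⟨hmem, hbound.trans ?_⟩
  gcongr
  · exact cOsc_nonneg c
  · linarith [l1vec_nonneg fun i => rowSum π i - p i, l1vec_nonneg fun j => colSum π j - q j]

end
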